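/- arXiv:1604.03345 — 2 statements merged into one kernel-verified Lean document; each statement's English description precedes it below -/
import Mathlib

section
/- Fix a real h > 0. With the explicit functions of θ > 0 defined in the context, the quantity B₂(θ) = hθ/6 − (σ₁²/2)·h·θ³·(−α/6 + β/2)² − (σ₂²/2)·h·θ³·(γ/2 − (θ²·α·γ·σ₁²/2)·(−α/6 + β/2))² converges to h/2 as θ → +∞. -/
open Real Filter

/-- `Var(G₁)` as an explicit function of `θ`. -/
noncomputable def V1 (θ : ℝ) : ℝ := (1 - Real.exp (-2 * θ)) / (2 * θ)

/-- `Var(G₂)` as an explicit function of `θ`. -/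
noncomputable def V2 (θ : ℝ) : ℝ :=
  (1 + 1 / θ) ^ 2 * (1 - Real.exp (-2 * θ)) / (2 * θ) + 1 / θ ^ 2
    - (2 / θ ^ 2 + 2 / θ ^ 3) * (1 - Real.exp (-θ))

/-- `Var(G₃)` as an explicit function of `θ`. -/
noncomputable def V3 (θ : ℝ) : ℝ :=
  (1 + 2 / θ + 2 / θ ^ 2) ^ 2 * (1 - Real.exp (-2 * θ)) / (2 * θ)
    + (2 / θ + 2 / θ ^ 2) ^ 3 * θ / 6 - 8 / (6 * θ ^ 5)
    - (4 / θ ^ 2) * (1 + 2 / θ + 2 / θ ^ 2)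

/-- `Cov(G₁,G₂)` as an explicit function of `θ`. -/
noncomputable def C12 (θ : ℝ) : ℝ :=
  (1 / (2 * θ) + 1 / (2 * θ ^ 2)) * (1 - Real.exp (-2 * θ)) + (Real.exp (-θ) - 1) / θ ^ 2

/-- `Cov(G₁,G₃)` as an explicit function of `θ`. -/
noncomputable def C13 (θ : ℝ) : ℝ :=
  (1 / (2 * θ) + 1 / θ ^ 2 + 1 / θ ^ 3) * (1 - Real.exp (-2 * θ)) - 2 / θ ^ 2

/-- `Cov(G₂,G₃)` as an explicit function of `θ`. -/
noncomputable def C23 (θ : ℝ) : ℝ :=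
  (1 + 1 / θ) * (1 / (2 * θ) + 1 / θ ^ 2 + 1 / θ ^ 3) * (1 - Real.exp (-2 * θ))
    - (1 / θ ^ 2 + 2 / θ ^ 3 + 2 / θ ^ 4) * (1 - Real.exp (-θ)) - 1 / θ ^ 2

noncomputable def alphaC (θ : ℝ) : ℝ := Real.sqrt (V1 θ)

noncomputable def betaC (θ : ℝ) : ℝ := C13 θ / alphaC θ

noncomputable def gammaC (θ : ℝ) : ℝ := Real.sqrt (V3 θ - betaC θ ^ 2)

noncomputable def aC (θ : ℝ) : ℝ := C12 θ / alphaC θ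

noncomputable def bC (θ : ℝ) : ℝ := (C23 θ - aC θ * betaC θ) / gammaC θ

noncomputable def c2C (θ : ℝ) : ℝ := V2 θ - aC θ ^ 2 - bC θ ^ 2

noncomputable def sigma1sq (θ : ℝ) : ℝ :=
  (2 * (-(θ ^ 2 / 3 + θ / 2) * alphaC θ ^ 2 + θ ^ 2 * alphaC θ * betaC θ / 2 + 1 / 2))⁻¹

noncomputable def sigma2sq (θ : ℝ) : ℝ :=
  (2 * (-(sigma1sq θ * θ ^ 4 * alphaC θ ^ 2 * gammaC θ ^ 2 / 8) + 1 / 2))⁻¹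

/-!
Write `E = 1 - exp (-2θ)` and `W = (θ² + 3θ + 3) E - 6θ`. Up to square roots that cancel, every
quantity entering `B₂` is rational in `θ`, `E` and `W`: the two terms subtracted in `B₂` are

  `h W² / (6θE (W + 3E))`  and  `h W / (2θ (W + 3E))`,

and their sum collapses to `h W / (6θE)`. Hence
`B₂(θ) = (h/2) (2/E - 1 - 1/θ) = (h/2) (coth θ - 1/θ)` for every `θ > 0`, and the limit is
immediate. All radicands and denominators are positive because `W > 0`, which says that `exp (2θ)`
exceeds its `[2/2]` Padé approximant.
-/

/-- The factor `E = 1 - exp (-2θ)` through which the exponential enters all the coefficients. -/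
noncomputable def oneSubExp (θ : ℝ) : ℝ := 1 - exp (-2 * θ)

/-- The quantity `W = (θ² + 3θ + 3) E - 6θ` measuring how far `exp (2θ)` exceeds its `[2/2]` Padé
approximant `(θ² + 3θ + 3) / (θ² - 3θ + 3)`. -/
noncomputable def padeGap (θ : ℝ) : ℝ := (θ ^ 2 + 3 * θ + 3) * oneSubExp θ - 6 * θ

/-- The linear combination `δ = -α/6 + β/2` shared by the two squares in `B₂`. -/
noncomputable def deltaC (θ : ℝ) : ℝ := -(alphaC θ) / 6 + betaC θ / 2

/-- The quantity `B₂(θ)`, with parameter `h`. -/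
noncomputable def B2 (h θ : ℝ) : ℝ :=
  h * θ / 6
    - sigma1sq θ / 2 * h * θ ^ 3 * deltaC θ ^ 2
    - sigma2sq θ / 2 * h * θ ^ 3 *
        (gammaC θ / 2 - (θ ^ 2 * alphaC θ * gammaC θ * sigma1sq θ / 2) * deltaC θ) ^ 2

lemma pade_denom_pos (x : ℝ) : 0 < x ^ 2 - 6 * x + 12 := by
  nlinarith [sq_nonneg (x - 3)]

lemma hasDerivAt_exp_neg_mul_pade (x : ℝ) :
    HasDerivAt (fun y : ℝ ↦ exp (-y) * ((y ^ 2 + 6 * y + 12) / (y ^ 2 - 6 * y + 12)))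
      (-(exp (-x) * (x ^ 4 / (x ^ 2 - 6 * x + 12) ^ 2))) x := by
  have hden := (pade_denom_pos x).ne'
  have hexp : HasDerivAt (fun y : ℝ ↦ exp (-y)) (-exp (-x)) x := by
    simpa using (hasDerivAt_neg x).exp
  have hquad (c : ℝ) : HasDerivAt (fun y : ℝ ↦ y ^ 2 + c * y + 12) (2 * x + c) x := by
    simpa using ((hasDerivAt_pow 2 x).add ((hasDerivAt_id x).const_mul c)).add_const 12
  have hminus : HasDerivAt (fun y : ℝ ↦ y ^ 2 - 6 * y + 12) (2 * x - 6) x := by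
    simpa [sub_eq_add_neg] using hquad (-6)
  refine (hexp.fun_mul ((hquad 6).fun_div hminus hden)).congr_deriv ?_
  field_simp
  ring

lemma exp_neg_mul_pade_lt_one {x : ℝ} (hx : 0 < x) :
    exp (-x) * ((x ^ 2 + 6 * x + 12) / (x ^ 2 - 6 * x + 12)) < 1 := by
  have hanti : StrictAntiOn
      (fun y : ℝ ↦ exp (-y) * ((y ^ 2 + 6 * y + 12) / (y ^ 2 - 6 * y + 12))) (Set.Ici 0) := by
    refine strictAntiOn_of_deriv_neg (convex_Ici 0)
      (fun y _ ↦ (hasDerivAt_exp_neg_mul_pade y).continuousAt.continuousWithinAt) fun y hy ↦ ?_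
    rw [interior_Ici, Set.mem_Ioi] at hy
    have hden := pade_denom_pos y
    rw [(hasDerivAt_exp_neg_mul_pade y).deriv, neg_lt_zero]
    positivity
  simpa using hanti Set.self_mem_Ici hx.le hx

section ClosedForms

variable {θ : ℝ}

lemma oneSubExp_pos (hθ : 0 < θ) : 0 < oneSubExp θ :=
  sub_pos.mpr <| exp_lt_one_iff.mpr <| by linarith

lemma padeGap_pos (hθ : 0 < θ) : 0 < padeGap θ := by
  have hpade := exp_neg_mul_pade_lt_one (x := 2 * θ) (by positivity)
  rw [← mul_div_assoc, div_lt_one (pade_denom_pos _), ← neg_mul] at hpade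
  rw [padeGap, oneSubExp]
  linarith

lemma padeGap_add_pos (hθ : 0 < θ) : 0 < padeGap θ + 3 * oneSubExp θ := by
  linarith [padeGap_pos hθ, oneSubExp_pos hθ]

lemma alphaC_pos (hθ : 0 < θ) : 0 < alphaC θ :=
  sqrt_pos.mpr <| div_pos (oneSubExp_pos hθ) (by positivity)

lemma alphaC_sq (hθ : 0 < θ) : alphaC θ ^ 2 = oneSubExp θ / (2 * θ) :=
  sq_sqrt (div_pos (oneSubExp_pos hθ) (by positivity)).le

lemma alphaC_mul_betaC (hθ : 0 < θ) : alphaC θ * betaC θ = C13 θ :=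
  mul_div_cancel₀ _ (alphaC_pos hθ).ne'

lemma V3_sub_betaC_sq (hθ : 0 < θ) :
    V3 θ - betaC θ ^ 2 = 4 * padeGap θ / (3 * θ ^ 4 * oneSubExp θ) := by
  have hE := (oneSubExp_pos hθ).ne'
  rw [betaC, div_pow, alphaC_sq hθ, V3, C13, padeGap, ← oneSubExp]
  field_simp
  ring

lemma gammaC_sq (hθ : 0 < θ) :
    gammaC θ ^ 2 = 4 * padeGap θ / (3 * θ ^ 4 * oneSubExp θ) := by
  have hE := oneSubExp_pos hθ
  have hW := padeGap_pos hθ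
  rw [gammaC, V3_sub_betaC_sq hθ, sq_sqrt (by positivity)]

lemma sigma1sq_eq (hθ : 0 < θ) :
    sigma1sq θ = 6 * θ / (padeGap θ + 3 * oneSubExp θ) := by
  have hinv : 2 * (-(θ ^ 2 / 3 + θ / 2) * alphaC θ ^ 2 + θ ^ 2 * alphaC θ * betaC θ / 2 + 1 / 2)
      = (padeGap θ + 3 * oneSubExp θ) / (6 * θ) := by
    rw [mul_assoc (θ ^ 2), alphaC_mul_betaC hθ, alphaC_sq hθ, C13, padeGap, ← oneSubExp]
    field_simp
    ring
  rw [sigma1sq, hinv, inv_div]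

lemma sigma2sq_eq (hθ : 0 < θ) :
    sigma2sq θ = (padeGap θ + 3 * oneSubExp θ) / (3 * oneSubExp θ) := by
  have hE := (oneSubExp_pos hθ).ne'
  have hU := (padeGap_add_pos hθ).ne'
  have hinv : 2 * (-(sigma1sq θ * θ ^ 4 * alphaC θ ^ 2 * gammaC θ ^ 2 / 8) + 1 / 2)
      = 3 * oneSubExp θ / (padeGap θ + 3 * oneSubExp θ) := by
    rw [sigma1sq_eq hθ, alphaC_sq hθ, gammaC_sq hθ]
    field_simp
    ring
  rw [sigma2sq, hinv, inv_div]

lemma alphaC_mul_deltaC (hθ : 0 < θ) :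
    alphaC θ * deltaC θ = padeGap θ / (6 * θ ^ 3) := by
  have hexpand : alphaC θ * deltaC θ = -alphaC θ ^ 2 / 6 + alphaC θ * betaC θ / 2 := by
    rw [deltaC]
    ring
  rw [hexpand, alphaC_mul_betaC hθ, alphaC_sq hθ, C13, padeGap, ← oneSubExp]
  field_simp
  ring

lemma deltaC_sq (hθ : 0 < θ) :
    deltaC θ ^ 2 = padeGap θ ^ 2 / (18 * θ ^ 5 * oneSubExp θ) := by
  have hE := (oneSubExp_pos hθ).ne'
  rw [eq_div_of_mul_eq (alphaC_pos hθ).ne' ((mul_comm _ _).trans (alphaC_mul_deltaC hθ)),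
    div_pow, alphaC_sq hθ]
  field_simp
  ring

lemma gammaC_div_two_sub_eq (hθ : 0 < θ) :
    gammaC θ / 2 - (θ ^ 2 * alphaC θ * gammaC θ * sigma1sq θ / 2) * deltaC θ
      = gammaC θ / 2 * (3 * oneSubExp θ / (padeGap θ + 3 * oneSubExp θ)) := by
  have hU := (padeGap_add_pos hθ).ne'
  calc gammaC θ / 2 - (θ ^ 2 * alphaC θ * gammaC θ * sigma1sq θ / 2) * deltaC θ
      = gammaC θ / 2 * (1 - θ ^ 2 * sigma1sq θ * (alphaC θ * deltaC θ)) := by ring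
    _ = gammaC θ / 2 * (3 * oneSubExp θ / (padeGap θ + 3 * oneSubExp θ)) := by
      rw [alphaC_mul_deltaC hθ, sigma1sq_eq hθ]
      field_simp
      ring

lemma B2_eq_padeGap (h : ℝ) (hθ : 0 < θ) :
    B2 h θ = h * (θ / 6 - padeGap θ / (6 * θ * oneSubExp θ)) := by
  have hE := (oneSubExp_pos hθ).ne'
  have hU := (padeGap_add_pos hθ).ne'
  rw [B2, gammaC_div_two_sub_eq hθ, mul_pow, div_pow (gammaC θ), gammaC_sq hθ, deltaC_sq hθ,
    sigma1sq_eq hθ, sigma2sq_eq hθ]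
  field_simp
  ring

lemma B2_eq (h : ℝ) (hθ : 0 < θ) :
    B2 h θ = h / 2 * (2 / oneSubExp θ - 1 - 1 / θ) := by
  have hE := (oneSubExp_pos hθ).ne'
  rw [B2_eq_padeGap h hθ, padeGap]
  field_simp
  ring

end ClosedForms

lemma tendsto_oneSubExp_atTop : Tendsto oneSubExp atTop (nhds 1) := by
  have hexp : Tendsto (fun θ : ℝ ↦ exp (-2 * θ)) atTop (nhds 0) :=
    tendsto_exp_atBot.comp (tendsto_id.const_mul_atTop_of_neg (by norm_num))
  simpa only [oneSubExp, sub_zero] using! hexp.const_sub 1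

theorem B2_tendsto_general (h : ℝ) : Tendsto (B2 h) atTop (nhds (h / 2)) := by
  have hlim : Tendsto (fun θ ↦ h / 2 * (2 / oneSubExp θ - 1 - 1 / θ)) atTop
      (nhds (h / 2 * (2 / 1 - 1 - 0))) :=
    (((tendsto_const_nhds.div tendsto_oneSubExp_atTop one_ne_zero).sub_const 1).sub
      (tendsto_const_nhds.div_atTop tendsto_id)).const_mul (h / 2)
  have hclosed : (fun θ ↦ h / 2 * (2 / oneSubExp θ - 1 - 1 / θ)) =ᶠ[atTop] B2 h := by
    filter_upwards [eventually_gt_atTop 0] with θ hθ using (B2_eq h hθ).symm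
  convert hlim.congr' hclosed using 2
  norm_num

theorem B2_tendsto (h : ℝ) (hh : 0 < h)
    (hwd : ∀ᶠ θ : ℝ in atTop,
      0 < V3 θ - betaC θ ^ 2 ∧
      0 < -(θ ^ 2 / 3 + θ / 2) * alphaC θ ^ 2 + θ ^ 2 * alphaC θ * betaC θ / 2 + 1 / 2 ∧
      0 < -(sigma1sq θ * θ ^ 4 * alphaC θ ^ 2 * gammaC θ ^ 2 / 8) + 1 / 2) :
    Tendsto (fun θ : ℝ =>
        h * θ / 6
          - sigma1sq θ / 2 * h * θ ^ 3 * (-(alphaC θ) / 6 + betaC θ / 2) ^ 2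
          - sigma2sq θ / 2 * h * θ ^ 3 *
              (gammaC θ / 2 -
                (θ ^ 2 * alphaC θ * gammaC θ * sigma1sq θ / 2) *
                  (-(alphaC θ) / 6 + betaC θ / 2)) ^ 2)
      atTop (nhds (h / 2)) :=
  B2_tendsto_general h
end

section
/- Let K be a Markov kernel from a measurable space E₁ to a measurable space E₂. Suppose there exist a finite measure λ on E₂ and constants ε₁, ε₂ > 0 with ε₁·ε₂ = ε² and ε² ∈ (0,1), such that ε₁·λ(A) ≤ K(x, A) ≤ (1/ε₂)·λ(A) for every x ∈ E₁ and every measurable A ⊆ E₂. Then for all probability measures μ, ν on E₁, sup_A |(Kμ)(A) − (Kν)(A)| ≤ (1 − ε²) · sup_B |μ(B) − ν(B)|, where the suprema run over measurable subsets of E₂ and E₁ respectively. -/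
open MeasureTheory ProbabilityTheory

/-- Total variation distance `sup_A |μ(A) − ν(A)|` between two measures. -/
noncomputable def tvDist {E : Type*} [MeasurableSpace E] (μ ν : Measure E) : ℝ :=
  ⨆ s : { s : Set E // MeasurableSet s }, |(μ s).toReal - (ν s).toReal|

/-!
Integrating a function of oscillation at most `c` against two measures of equal mass, one may
shift it to take values in `[0, c]`; a Hahn decomposition then bounds the difference of the
integrals by `c` times the total variation distance. Applied to `x ↦ K x A`, this is Dobrushin's
theorem: a kernel whose rows are pairwise at distance at most `c` contracts by the factor `c`.
Two probability measures dominating a common measure `η` are at distance at most `1 - η(E)`, so a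
minorized kernel (Doeblin's condition) contracts by `1 - η(E₂)`. For an `ε`-mixing kernel,
`η = ε₁ λ` has mass at least `ε₁ ε₂ = ε²`, because the upper domination forces `λ(E₂) ≥ ε₂`.
-/

open Set

section TotalVariation

variable {E : Type*} [MeasurableSpace E] {μ ν : Measure E}

lemma tvDist_comm (μ ν : Measure E) : tvDist μ ν = tvDist ν μ := by
  simp_rw [tvDist, abs_sub_comm]

lemma tvDist_le {c : ℝ} (h : ∀ s, MeasurableSet s → |μ.real s - ν.real s| ≤ c) :
    tvDist μ ν ≤ c :=
  have : Nonempty { s : Set E // MeasurableSet s } := ⟨⟨∅, .empty⟩⟩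
  ciSup_le fun s => h s s.2

lemma abs_measureReal_sub_le_tvDist [IsFiniteMeasure μ] [IsFiniteMeasure ν] {s : Set E}
    (hs : MeasurableSet s) : |μ.real s - ν.real s| ≤ tvDist μ ν := by
  refine le_ciSup (f := fun t : { t : Set E // MeasurableSet t } => |μ.real t - ν.real t|)
    ⟨μ.real univ + ν.real univ, ?_⟩ ⟨s, hs⟩
  rintro _ ⟨t, rfl⟩
  calc |μ.real t - ν.real t|
      ≤ |μ.real t| + |ν.real t| := abs_sub _ _
    _ = μ.real t + ν.real t := by simp only [abs_of_nonneg measureReal_nonneg]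
    _ ≤ μ.real univ + ν.real univ :=
      add_le_add (measureReal_mono (subset_univ _)) (measureReal_mono (subset_univ _))

lemma tvDist_le_measureReal_univ_sub [IsFiniteMeasure μ] [IsFiniteMeasure ν] {η : Measure E}
    (hμν : μ univ = ν univ) (hημ : η ≤ μ) (hην : η ≤ ν) :
    tvDist μ ν ≤ μ.real univ - η.real univ := by
  have : IsFiniteMeasure η := isFiniteMeasure_of_le μ hημ
  have hmass : μ.real univ = ν.real univ := congrArg ENNReal.toReal hμν
  have real_le {ρ : Measure E} [IsFiniteMeasure ρ] (h : η ≤ ρ) (t : Set E) :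
      η.real t ≤ ρ.real t := ENNReal.toReal_mono (measure_ne_top ρ t) (h t)
  refine tvDist_le fun s hs => abs_sub_le_iff.2 ⟨?_, ?_⟩
  all_goals
    linarith [real_le hημ s, real_le hημ sᶜ, real_le hην s, real_le hην sᶜ,
      measureReal_add_measureReal_compl (μ := μ) hs,
      measureReal_add_measureReal_compl (μ := ν) hs,
      measureReal_add_measureReal_compl (μ := η) hs]

lemma integral_sub_integral_le_mul_tvDist [IsFiniteMeasure μ] [IsFiniteMeasure ν] {g : E → ℝ}
    {c : ℝ} (hc : 0 ≤ c) (hgμ : Integrable g μ) (hgν : Integrable g ν)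
    (hg : ∀ x, g x ∈ Icc 0 c) :
    ∫ x, g x ∂μ - ∫ x, g x ∂ν ≤ c * tvDist μ ν := by
  obtain ⟨s, hs⟩ := exists_isHahnDecomposition μ ν
  have on_s : ∫ x in s, g x ∂μ ≤ ∫ x in s, g x ∂ν :=
    integral_mono_measure hs.le_on (.of_forall fun x => (hg x).1) hgν.restrict
  have on_compl : ∫ x in sᶜ, (c - g x) ∂ν ≤ ∫ x in sᶜ, (c - g x) ∂μ :=
    integral_mono_measure hs.ge_on_compl (.of_forall fun x => sub_nonneg.2 (hg x).2)
      ((integrable_const c).sub hgμ.restrict)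
  rw [integral_sub (integrable_const c) hgν.restrict,
    integral_sub (integrable_const c) hgμ.restrict, setIntegral_const, setIntegral_const,
    smul_eq_mul, smul_eq_mul] at on_compl
  calc ∫ x, g x ∂μ - ∫ x, g x ∂ν
      = (∫ x in s, g x ∂μ + ∫ x in sᶜ, g x ∂μ) - (∫ x in s, g x ∂ν + ∫ x in sᶜ, g x ∂ν) := by
        rw [integral_add_compl hs.measurableSet hgμ, integral_add_compl hs.measurableSet hgν]
    _ ≤ c * (μ.real sᶜ - ν.real sᶜ) := by linarith
    _ ≤ c * tvDist μ ν := by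
        gcongr
        exact (le_abs_self _).trans (abs_measureReal_sub_le_tvDist hs.measurableSet.compl)

lemma abs_integral_sub_integral_le_mul_tvDist [IsFiniteMeasure μ] [IsFiniteMeasure ν]
    (hμν : μ univ = ν univ) {g : E → ℝ} {c : ℝ} (hgμ : Integrable g μ) (hgν : Integrable g ν)
    (hg : ∀ x y, g x - g y ≤ c) :
    |∫ x, g x ∂μ - ∫ x, g x ∂ν| ≤ c * tvDist μ ν := by
  cases isEmpty_or_nonempty E with
  | inl _ => simp [tvDist, Measure.eq_zero_of_isEmpty]
  | inr hE =>
    let x₀ := hE.some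
    have hc : 0 ≤ c := by simpa using hg x₀ x₀
    let m := ⨅ x, g x
    have hbdd : BddBelow (range g) :=
      ⟨g x₀ - c, forall_mem_range.2 fun y => sub_le_comm.1 (hg x₀ y)⟩
    have hshift (x : E) : g x - m ∈ Icc 0 c :=
      ⟨sub_nonneg.2 (ciInf_le hbdd x), sub_le_comm.1 (le_ciInf fun y => sub_le_comm.1 (hg x y))⟩
    have hshiftμ : Integrable (fun x => g x - m) μ := hgμ.sub (integrable_const m)
    have hshiftν : Integrable (fun x => g x - m) ν := hgν.sub (integrable_const m)
    have hdiff : ∫ x, g x ∂μ - ∫ x, g x ∂ν = ∫ x, (g x - m) ∂μ - ∫ x, (g x - m) ∂ν := by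
      rw [integral_sub hgμ (integrable_const m), integral_sub hgν (integrable_const m),
        integral_const, integral_const, measureReal_def, measureReal_def, hμν,
        sub_sub_sub_cancel_right]
    rw [hdiff]
    refine abs_sub_le_iff.2 ⟨integral_sub_integral_le_mul_tvDist hc hshiftμ hshiftν hshift, ?_⟩
    rw [tvDist_comm]
    exact integral_sub_integral_le_mul_tvDist hc hshiftν hshiftμ hshift

end TotalVariation

section Kernel

variable {E₁ E₂ : Type*} [MeasurableSpace E₁] [MeasurableSpace E₂]

lemma measureReal_bind_eq_integral (K : Kernel E₁ E₂) [IsFiniteKernel K] (μ : Measure E₁)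
    {s : Set E₂} (hs : MeasurableSet s) : (μ.bind K).real s = ∫ x, (K x).real s ∂μ := by
  rw [measureReal_def, Measure.bind_apply hs K.aemeasurable]
  exact (integral_toReal (K.measurable_coe hs).aemeasurable
    (.of_forall fun x => measure_lt_top (K x) s)).symm

lemma tvDist_bind_le_mul (K : Kernel E₁ E₂) [IsFiniteKernel K] {c : ℝ}
    (hK : ∀ x y, tvDist (K x) (K y) ≤ c) {μ ν : Measure E₁} [IsFiniteMeasure μ]
    [IsFiniteMeasure ν] (hμν : μ univ = ν univ) :
    tvDist (μ.bind K) (ν.bind K) ≤ c * tvDist μ ν := by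
  refine tvDist_le fun s hs => ?_
  rw [measureReal_bind_eq_integral K μ hs, measureReal_bind_eq_integral K ν hs]
  have hosc (x y : E₁) : (K x).real s - (K y).real s ≤ c :=
    calc (K x).real s - (K y).real s
        ≤ |(K x).real s - (K y).real s| := le_abs_self _
      _ ≤ tvDist (K x) (K y) := abs_measureReal_sub_le_tvDist hs
      _ ≤ c := hK x y
  exact abs_integral_sub_integral_le_mul_tvDist hμν (Kernel.IsFiniteKernel.integrable μ K hs)
    (Kernel.IsFiniteKernel.integrable ν K hs) hosc

theorem mixing_kernel_contracting_general (K : Kernel E₁ E₂) [IsMarkovKernel K]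
    (η : Measure E₂) (hη : ∀ x, η ≤ K x) {δ : ℝ} (hδ : δ ≤ η.real univ)
    {μ ν : Measure E₁} [IsFiniteMeasure μ] [IsFiniteMeasure ν] (hμν : μ univ = ν univ) :
    tvDist (μ.bind K) (ν.bind K) ≤ (1 - δ) * tvDist μ ν := by
  refine tvDist_bind_le_mul K (fun x y => ?_) hμν
  have hmass : K x univ = K y univ := by rw [measure_univ, measure_univ]
  calc tvDist (K x) (K y)
      ≤ (K x).real univ - η.real univ := tvDist_le_measureReal_univ_sub hmass (hη x) (hη y)
    _ ≤ 1 - δ := by rw [probReal_univ]; gcongr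

end Kernel

lemma mul_le_measureReal_univ_smul {E : Type*} [MeasurableSpace E] {lam : Measure E}
    [IsFiniteMeasure lam] {ε₁ ε₂ : ℝ} (hε₁ : 0 ≤ ε₁) (hε₂ : 0 < ε₂)
    (h : 1 ≤ ENNReal.ofReal (1 / ε₂) * lam univ) :
    ε₁ * ε₂ ≤ (ENNReal.ofReal ε₁ • lam).real univ := by
  have hlam : ε₂ ≤ lam.real univ := by
    have h_one := ENNReal.toReal_mono (by finiteness) h
    rwa [ENNReal.toReal_one, ENNReal.toReal_mul, ENNReal.toReal_ofReal (by positivity),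
      ← measureReal_def, one_div_mul_eq_div, one_le_div hε₂] at h_one
  rw [measureReal_ennreal_smul_apply, ENNReal.toReal_ofReal hε₁]
  gcongr

/-- An `ε`-mixing Markov kernel is `(1 − ε²)`-contracting in total variation. -/
theorem mixing_kernel_contracting
    {E₁ E₂ : Type*} [MeasurableSpace E₁] [MeasurableSpace E₂]
    (K : Kernel E₁ E₂) (hK : IsMarkovKernel K)
    (lam : Measure E₂) (hlam : IsFiniteMeasure lam)
    (ε ε₁ ε₂ : ℝ) (hε₁ : 0 < ε₁) (hε₂ : 0 < ε₂) (hεsq : ε₁ * ε₂ = ε ^ 2)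
    (hε : ε ^ 2 ∈ Set.Ioo (0 : ℝ) 1)
    (hmix : ∀ x, ∀ A : Set E₂, MeasurableSet A →
      ENNReal.ofReal ε₁ * lam A ≤ K x A ∧ K x A ≤ ENNReal.ofReal (1 / ε₂) * lam A)
    (μ ν : Measure E₁) (hμ : IsProbabilityMeasure μ) (hν : IsProbabilityMeasure ν) :
    tvDist (μ.bind K) (ν.bind K) ≤ (1 - ε ^ 2) * tvDist μ ν := by
  obtain ⟨x⟩ := nonempty_of_isProbabilityMeasure μ
  have hmass : ε ^ 2 ≤ (ENNReal.ofReal ε₁ • lam).real univ :=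
    hεsq ▸ mul_le_measureReal_univ_smul hε₁.le hε₂ (measure_univ.ge.trans (hmix x univ .univ).2)
  have hminor (x : E₁) : ENNReal.ofReal ε₁ • lam ≤ K x :=
    Measure.le_iff.2 fun A hA => (hmix x A hA).1
  exact mixing_kernel_contracting_general K _ hminor hmass (measure_univ.trans measure_univ.symm)
end
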